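/- Let p be a prime, q = 1/p, and let k ≥ 0 and μ ≥ 1 be integers. Set s = ⌊(μ−1)/2⌋. Then P(2k, p^μ) = P(2k+1, p^μ) + q^{2k+μ} · (Π_{2k}(q) / Π_k(q²)) · T_1(k,s). -/

import Mathlib

/-- Number of symmetric `n × n` matrices over `ZMod m` with nonzero determinant. -/
noncomputable def Nsym (n m : ℕ) : ℕ :=
  Nat.card {A : Matrix (Fin n) (Fin n) (ZMod m) // A.IsSymm ∧ A.det ≠ 0}

/-- Proportion of symmetric `n × n` matrices over `ZMod m` with nonzero determinant. -/
noncomputable def Psym (n m : ℕ) : ℝ :=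
  (Nsym n m : ℝ) / (m : ℝ) ^ (n * (n + 1) / 2)

/-- `Π_n(t) = ∏_{j=1}^n (1 - t^j)`. -/
noncomputable def PiProd (n : ℕ) (t : ℝ) : ℝ :=
  ∏ j ∈ Finset.range n, (1 - t ^ (j + 1))

/-- `T_β(k,s)`: equal to `1` if `k = 0`, and to
`∑_{j=0}^{s} q^{βj} · Π_{k+j−1}(q²) / (Π_j(q²) · Π_{k−1}(q²))` if `k ≥ 1`. -/
noncomputable def T (q : ℝ) (β k s : ℕ) : ℝ :=
  if k = 0 then 1
  else ∑ j ∈ Finset.range (s + 1),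
    q ^ (β * j) * PiProd (k + j - 1) (q ^ 2) / (PiProd j (q ^ 2) * PiProd (k - 1) (q ^ 2))

/-!
Fix a symmetric matrix `A` modulo `p ^ μ` whose reduction modulo `p` has corank `r`. A principal
minor of size `n - r` of `A` is a unit, and its Schur complement is divisible by `p`; when `A` runs
over its translates by `p • X`, the complement is `p` times a uniform symmetric matrix `Y` of size
`r`. Hence `det A` is a unit times `p ^ r * det Y`, and `Psym n (p ^ μ)` is the average of
`Psym r (p ^ (μ - r))` over the coranks `r` of symmetric matrices over the field with `p` elements.

Bordering a symmetric matrix changes its corank by `1`, `0` or `-1`, with probabilities which depend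
on the corank alone, so the corank is a Markov chain and its distribution follows by induction on
the size. The generating series in `μ` of `Psym n (p ^ μ)` therefore satisfy a triangular linear
recursion in `n`, which together with the case `n = 0` determines them, and a Durfee square identity
shows that a closed form solves it. The closed forms for the sizes `2 * k` and `2 * k + 1` differ by
`q ^ (2 * k + 1) * PiProd (2 * k) q / PiProd k (q ^ 2)` times the series of
`q ^ ν * T q 1 k (ν / 2)`, where `ν = μ - 1`.
-/

open Finset Matrix PowerSeries
open scoped BigOperators

section Averages

variable {G H M : Type*} [AddCommGroup G] [Fintype G] [Fintype H] [AddCommMonoid M] [Module ℚ≥0 M]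

theorem expect_add_right (a : G) (f : G → M) : 𝔼 g, f (g + a) = 𝔼 g, f g :=
  Fintype.expect_equiv (Equiv.addRight a) _ _ fun _ => rfl

theorem expect_eq_expect_expect_add [Nonempty H] (θ : H → G) (f : G → M) :
    𝔼 g, f g = 𝔼 g, 𝔼 h, f (g + θ h) := by
  rw [expect_comm]
  simp only [expect_add_right, Fintype.expect_const]

theorem expect_comp_addMonoidHom [AddCommGroup H] (φ : G →+ H) (hφ : Function.Surjective φ)
    (f : H → M) : 𝔼 g, f (φ g) = 𝔼 h, f h := by
  calc 𝔼 g, f (φ g) = 𝔼 g, 𝔼 h, f (φ (g + Function.surjInv hφ h)) :=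
        expect_eq_expect_expect_add _ fun g => f (φ g)
    _ = 𝔼 g, 𝔼 h, f (h + φ g) := by
        simp only [map_add, Function.surjInv_eq, add_comm]
    _ = 𝔼 h, f h := by simp only [expect_add_right, Fintype.expect_const]

theorem expect_ite_const {α : Type*} [Fintype α] [Nonempty α] (s : α → Prop) [DecidablePred s]
    (a b : ℝ) : 𝔼 x, (if s x then a else b) =
      (Fintype.card {x // s x} / Fintype.card α : ℝ) * a +
        (1 - Fintype.card {x // s x} / Fintype.card α) * b := by
  have split (x : α) : (if s x then a else b) = (if s x then 1 else 0) * (a - b) + b := by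
    split_ifs <;> ring
  simp only [split, expect_add_distrib, ← expect_mul, Fintype.expect_const]
  rw [Fintype.expect_eq_sum_div_card, Finset.sum_boole, Fintype.card_subtype]
  ring

end Averages

section SymmetricMatrices

/-- The module of symmetric matrices, over which all averages are taken. -/
def symMatrix (n R : Type*) [CommRing R] : Submodule R (Matrix n n R) where
  carrier := {A | A.IsSymm}
  zero_mem' := isSymm_zero
  add_mem' := IsSymm.add
  smul_mem' c _ hA := hA.smul c

noncomputable instance {n R : Type*} [CommRing R] [Finite n] [Finite R] :
    Fintype (symMatrix n R) :=
  Fintype.ofFinite _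

namespace symMatrix

variable {m n R S : Type*} [CommRing R] [CommRing S]

/-- Symmetric matrices are functions on unordered pairs of indices. -/
def equivSym2Fun (n R : Type*) [CommRing R] : symMatrix n R ≃ (Sym2 n → R) where
  toFun A := Sym2.lift ⟨A.1, fun i j => A.2.apply j i⟩
  invFun f := ⟨of fun i j => f s(i, j), IsSymm.ext fun i j => by simp [Sym2.eq_swap]⟩
  left_inv A := by ext; simp
  right_inv f := by ext z; induction z with | h i j => simp

/-- The map induced on symmetric matrices by a ring homomorphism of the coefficients. -/
def map (f : R →+* S) : symMatrix n R →+ symMatrix n S where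
  toFun A := ⟨A.1.map f, A.2.map f⟩
  map_zero' := by ext; simp
  map_add' A B := by ext; simp

theorem map_surjective {f : R →+* S} (hf : Function.Surjective f) :
    Function.Surjective (map f : symMatrix n R → symMatrix n S) := fun A =>
  ⟨⟨A.1.map (Function.surjInv hf), A.2.map _⟩, by
    ext i j
    exact Function.surjInv_eq hf _⟩

theorem det_map [Fintype n] [DecidableEq n] (f : R →+* S) (A : symMatrix n R) :
    (map f A).1.det = f A.1.det :=
  (f.map_det A.1).symm

/-- Renaming the indices of a symmetric matrix. -/
def reindex (e : m ≃ n) : symMatrix m R ≃ symMatrix n R :=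
  (Matrix.reindex e e).subtypeEquiv fun _ => (isSymm_reindex_iff e).symm

@[simp]
theorem coe_reindex (e : m ≃ n) (A : symMatrix m R) :
    (reindex e A : Matrix n n R) = Matrix.reindex e e A := rfl

end symMatrix

theorem card_symMatrix_fin (n : ℕ) (R : Type*) [CommRing R] [Fintype R] :
    Fintype.card (symMatrix (Fin n) R) = Fintype.card R ^ (n * (n + 1) / 2) := by
  classical
  rw [Fintype.card_congr (symMatrix.equivSym2Fun _ _), Fintype.card_fun, Sym2.card,
    Fintype.card_fin, Nat.choose_two_right, Nat.add_sub_cancel, mul_comm]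

theorem Psym_eq_expect (n m : ℕ) [NeZero m] :
    Psym n m = 𝔼 A : symMatrix (Fin n) (ZMod m), if A.1.det ≠ 0 then 1 else 0 := by
  have hN : Nsym n m = Fintype.card {A : symMatrix (Fin n) (ZMod m) // A.1.det ≠ 0} := by
    rw [Nsym, ← Nat.card_eq_fintype_card]
    exact Nat.card_congr (Equiv.subtypeSubtypeEquivSubtypeInter _ _).symm
  rw [Psym, hN, expect_ite_const, card_symMatrix_fin, ZMod.card]
  push_cast
  ring

theorem Psym_one (n : ℕ) : Psym n 1 = 0 := by
  rw [Psym_eq_expect]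
  exact expect_eq_zero fun _ _ => if_neg (not_not.2 (Subsingleton.elim _ _))

theorem Psym_zero_left {m : ℕ} (hm : 1 < m) : Psym 0 m = 1 := by
  have : Fact (1 < m) := ⟨hm⟩
  have : NeZero m := ⟨by omega⟩
  simp [Psym_eq_expect]

end SymmetricMatrices

section SchurComplement

variable {l r R S : Type*} [Fintype r] [DecidableEq r] [CommRing R] [CommRing S]

/-- The Schur complement of the lower right block `D` of a block matrix, with inverse blocks in the
sense of `Matrix.inv`: it is meaningful when `D` is invertible. -/
noncomputable def schurComplement (A : Matrix (l ⊕ r) (l ⊕ r) R) : Matrix l l R :=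
  A.toBlocks₁₁ - A.toBlocks₁₂ * A.toBlocks₂₂⁻¹ * A.toBlocks₂₁

theorem isSymm_schurComplement {A : Matrix (l ⊕ r) (l ⊕ r) R} (hA : A.IsSymm) :
    (schurComplement A).IsSymm := by
  have h₁₁ : A.toBlocks₁₁ᵀ = A.toBlocks₁₁ := congrArg toBlocks₁₁ hA
  have h₁₂ : A.toBlocks₁₂ᵀ = A.toBlocks₂₁ := congrArg toBlocks₂₁ hA
  have h₂₁ : A.toBlocks₂₁ᵀ = A.toBlocks₁₂ := congrArg toBlocks₁₂ hA
  have h₂₂ : A.toBlocks₂₂.IsSymm := congrArg toBlocks₂₂ hA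
  simp only [IsSymm, schurComplement, transpose_sub, transpose_mul, h₁₁, h₁₂, h₂₁, h₂₂.inv.eq,
    Matrix.mul_assoc]

theorem schurComplement_add_fromBlocks (A : Matrix (l ⊕ r) (l ⊕ r) R) (Y : Matrix l l R) :
    schurComplement (A + fromBlocks Y 0 0 0) = Y + schurComplement A := by
  rw [← fromBlocks_toBlocks A, fromBlocks_add]
  simp only [schurComplement, toBlocks_fromBlocks₁₁, toBlocks_fromBlocks₁₂, toBlocks_fromBlocks₂₁,
    toBlocks_fromBlocks₂₂, add_zero]
  abel

theorem schurComplement_map (φ : R →+* S) {A : Matrix (l ⊕ r) (l ⊕ r) R}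
    (hA : IsUnit A.toBlocks₂₂.det) : schurComplement (A.map φ) = (schurComplement A).map φ := by
  have hinv : (A.toBlocks₂₂.map φ)⁻¹ = A.toBlocks₂₂⁻¹.map φ := inv_eq_left_inv <| by
    rw [← Matrix.map_mul, nonsing_inv_mul _ hA, Matrix.map_one _ φ.map_zero φ.map_one]
  rw [schurComplement, schurComplement, Matrix.map_sub _ φ.map_sub, Matrix.map_mul,
    Matrix.map_mul, ← hinv]
  rfl

theorem det_eq_det_mul_det_schurComplement [Fintype l] [DecidableEq l]
    {A : Matrix (l ⊕ r) (l ⊕ r) R} (hA : IsUnit A.toBlocks₂₂.det) :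
    A.det = A.toBlocks₂₂.det * (schurComplement A).det := by
  have := invertibleOfIsUnitDet _ hA
  conv_lhs => rw [← fromBlocks_toBlocks A]
  rw [det_fromBlocks₂₂, invOf_eq_nonsing_inv, schurComplement]

end SchurComplement

section PrincipalMinor

variable {n K : Type*} [Fintype n] [Field K]

/-- The corank of a square matrix: the dimension of its kernel. -/
noncomputable def corank (A : Matrix n n K) : ℕ :=
  Module.finrank K (LinearMap.ker A.mulVecLin)

theorem rank_add_corank (A : Matrix n n K) : A.rank + corank A = Fintype.card n := by
  rw [← Module.finrank_fintype_fun_eq_card K]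
  exact A.mulVecLin.finrank_range_add_finrank_ker

theorem exists_equiv_sum_comp_inr {r s : ℕ} {a : Fin r → n} (ha : Function.Injective a)
    (hs : r + s = Fintype.card n) : ∃ e : Fin s ⊕ Fin r ≃ n, e ∘ Sum.inr = a := by
  classical
  have hcompl : Fintype.card ↥(Set.range a)ᶜ = s := by
    rw [Fintype.card_compl_set, Set.card_range_of_injective ha, Fintype.card_fin]
    omega
  exact ⟨(Equiv.sumComm _ _).trans <|
    ((Equiv.ofInjective a ha).sumCongr (Fintype.equivFinOfCardEq hcompl).symm).trans <|
      Equiv.Set.sumCompl _, by ext; simp⟩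

theorem exists_principal_submatrix_isUnit_det {A : Matrix n n K} (hA : A.IsSymm) :
    ∃ (a : Fin A.rank → n) (X : Matrix n (Fin A.rank) K),
      Function.Injective a ∧ IsUnit (A.submatrix a a).det ∧ A = X * A.submatrix a id := by
  classical
  have hbasis := Submodule.exists_fun_fin_finrank_span_eq K (Set.range A.row)
  rw [← rank_eq_finrank_span_row] at hbasis
  obtain ⟨f, hf, hspan, hli⟩ := hbasis
  choose a ha using hf
  obtain rfl : A.row ∘ a = f := funext ha
  have hrow (i : n) : A.row i ∈ Submodule.span K (Set.range (A.row ∘ a)) :=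
    hspan ▸ Submodule.subset_span ⟨i, rfl⟩
  choose X hX using fun i => (Submodule.mem_span_range_iff_exists_fun K).1 (hrow i)
  have hAX : A = of X * A.submatrix a id := by
    ext i j
    simpa [mul_apply] using (congrFun (hX i) j).symm
  have hrows : A.submatrix a id = A.submatrix a a * (of X)ᵀ := by
    calc A.submatrix a id = (A.submatrix id a)ᵀ := by rw [transpose_submatrix, hA.eq]
      _ = (of X * A.submatrix a a)ᵀ := congrArg (fun B => (B.submatrix id a)ᵀ) hAX
      _ = A.submatrix a a * (of X)ᵀ := by rw [transpose_mul, transpose_submatrix, hA.eq]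
  refine ⟨a, of X, hli.injective.of_comp, ?_, hAX⟩
  rw [← isUnit_iff_isUnit_det, ← vecMul_injective_iff_isUnit]
  have hinj : Function.Injective (A.submatrix a id).vecMul := vecMul_injective_iff.2 hli
  exact fun v w h => hinj <| by
    simp only [hrows, ← vecMul_vecMul]
    exact congrArg (· ᵥ* _) h

theorem exists_schurComplement_eq_zero {A : Matrix n n K} (hA : A.IsSymm) :
    ∃ e : Fin (corank A) ⊕ Fin A.rank ≃ n,
      IsUnit (A.submatrix e e).toBlocks₂₂.det ∧ schurComplement (A.submatrix e e) = 0 := by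
  obtain ⟨a, X, ha, hunit, hX⟩ := exists_principal_submatrix_isUnit_det hA
  obtain ⟨e, rfl⟩ := exists_equiv_sum_comp_inr ha (rank_add_corank A)
  have hD : IsUnit (A.submatrix e e).toBlocks₂₂.det := hunit
  have h₁₁ : (A.submatrix e e).toBlocks₁₁ =
      X.submatrix (e ∘ Sum.inl) id * (A.submatrix e e).toBlocks₂₁ :=
    congrArg (·.submatrix (e ∘ Sum.inl) (e ∘ Sum.inl)) hX
  have h₁₂ : (A.submatrix e e).toBlocks₁₂ =
      X.submatrix (e ∘ Sum.inl) id * (A.submatrix e e).toBlocks₂₂ :=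
    congrArg (·.submatrix (e ∘ Sum.inl) (e ∘ Sum.inr)) hX
  refine ⟨e, hD, ?_⟩
  rw [schurComplement, h₁₁, h₁₂, mul_nonsing_inv_cancel_right _ _ hD, sub_self]

end PrincipalMinor

section ResidueField

variable {n R K : Type*} [CommRing R] [Field K] {φ : R →+* K} {ϖ : R}

namespace symMatrix

/-- The symmetric matrix with upper left block `Y` along `e` and all other entries zero. -/
def padZero {l r : Type*} (e : l ⊕ r ≃ n) (Y : symMatrix l R) : symMatrix n R :=
  reindex e ⟨fromBlocks Y.1 0 0 0, Y.2.fromBlocks transpose_zero isSymm_zero⟩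

end symMatrix

theorem exists_eq_smul_of_map_eq_zero (hdvd : ∀ x, φ x = 0 → ϖ ∣ x) {A : Matrix n n R}
    (hA : A.IsSymm) (h0 : A.map φ = 0) : ∃ Z : symMatrix n R, A = ϖ • Z.1 := by
  classical
  choose! g hg using hdvd
  refine ⟨⟨A.map g, hA.map g⟩, ?_⟩
  ext i j
  exact hg _ (congrFun₂ h0 i j)

variable [Fintype n] [DecidableEq n]

theorem exists_det_add_smul_padZero [IsLocalHom φ] (hdvd : ∀ x, φ x = 0 → ϖ ∣ x) {l r : Type*}
    [Fintype l] [DecidableEq l] [Fintype r] [DecidableEq r] {e : l ⊕ r ≃ n} {A : symMatrix n R}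
    (hunit : IsUnit ((A.1.map φ).submatrix e e).toBlocks₂₂.det)
    (hschur : schurComplement ((A.1.map φ).submatrix e e) = 0) :
    ∃ (u : R) (Z : symMatrix l R), IsUnit u ∧
      ∀ Y, (A + ϖ • symMatrix.padZero e Y).1.det = u * (ϖ ^ Fintype.card l * (Y + Z).1.det) := by
  set B := A.1.submatrix e e
  have hB : IsUnit B.toBlocks₂₂.det := by
    refine isUnit_of_map_unit φ _ ?_
    rw [φ.map_det]
    exact hunit
  obtain ⟨Z, hZ⟩ : ∃ Z : symMatrix l R, schurComplement B = ϖ • Z.1 :=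
    exists_eq_smul_of_map_eq_zero hdvd (isSymm_schurComplement (A.2.submatrix e))
      ((schurComplement_map φ hB).symm.trans hschur)
  refine ⟨_, Z, hB, fun Y => ?_⟩
  have hblocks : (A + ϖ • symMatrix.padZero e Y).1.submatrix e e =
      B + fromBlocks (ϖ • Y.1) 0 0 0 := by
    ext (i | i) (j | j) <;> simp [B, symMatrix.padZero]
  have hD : (B + fromBlocks (ϖ • Y.1) 0 0 0).toBlocks₂₂ = B.toBlocks₂₂ := by
    ext; simp [toBlocks₂₂]
  rw [← det_submatrix_equiv_self e, hblocks, det_eq_det_mul_det_schurComplement (hD ▸ hB), hD,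
    schurComplement_add_fromBlocks, hZ, ← smul_add, det_smul]
  rfl

variable {M : Type*} [Finite R] [AddCommMonoid M] [Module ℚ≥0 M]

theorem expect_det_add_smul [IsLocalHom φ] (hdvd : ∀ x, φ x = 0 → ϖ ∣ x) (hϖ : φ ϖ = 0)
    {F : R → M} (hF : ∀ u x, IsUnit u → F (u * x) = F x) (A : symMatrix n R) :
    𝔼 X : symMatrix n R, F (A + ϖ • X).1.det =
      𝔼 Y : symMatrix (Fin (corank (A.1.map φ))) R, F (ϖ ^ corank (A.1.map φ) * Y.1.det) := by
  obtain ⟨e, hunit, hschur⟩ := exists_schurComplement_eq_zero (A.2.map φ)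
  have hmap (X : symMatrix n R) : (A + ϖ • X).1.map φ = A.1.map φ := by
    ext; simp [hϖ]
  choose u Z hu hdet using fun X : symMatrix n R =>
    exists_det_add_smul_padZero hdvd (A := A + ϖ • X) (by rwa [hmap]) (by rwa [hmap])
  rw [expect_eq_expect_expect_add (symMatrix.padZero e)]
  simp only [smul_add, ← add_assoc, hdet, hF _ _ (hu _), Fintype.card_fin]
  have htranslate (X : symMatrix n R) := expect_add_right (Z X) fun Y : symMatrix _ R =>
    F (ϖ ^ corank (A.1.map φ) * Y.1.det)
  simp only [htranslate, Fintype.expect_const]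

theorem expect_det_eq_expect_expect [Finite K] (hφ : Function.Surjective φ) [IsLocalHom φ]
    (hdvd : ∀ x, φ x = 0 → ϖ ∣ x) (hϖ : φ ϖ = 0) {F : R → M}
    (hF : ∀ u x, IsUnit u → F (u * x) = F x) :
    𝔼 A : symMatrix n R, F A.1.det =
      𝔼 A : symMatrix n K, 𝔼 Y : symMatrix (Fin (corank A.1)) R, F (ϖ ^ corank A.1 * Y.1.det) := by
  rw [← expect_comp_addMonoidHom _ (symMatrix.map_surjective hφ),
    expect_eq_expect_expect_add (fun X : symMatrix n R => ϖ • X)]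
  exact expect_congr rfl fun A _ => expect_det_add_smul hdvd hϖ hF A

end ResidueField

section PrimePower

variable {p μ : ℕ} [Fact p.Prime]

theorem natCast_dvd_of_castHom_eq_zero {a b : ℕ} (h : a ∣ b) (x : ZMod b)
    (hx : ZMod.castHom h (ZMod a) x = 0) : (a : ZMod b) ∣ x := by
  obtain ⟨y, rfl⟩ := ZMod.intCast_surjective x
  rw [map_intCast, ZMod.intCast_zmod_eq_zero_iff_dvd] at hx
  simpa using map_dvd (Int.castRingHom (ZMod b)) hx

theorem prime_pow_mul_eq_zero_iff (s : ℕ) (x : ZMod (p ^ μ)) :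
    (p : ZMod (p ^ μ)) ^ s * x = 0 ↔
      ZMod.castHom (pow_dvd_pow p (Nat.sub_le μ s)) (ZMod (p ^ (μ - s))) x = 0 := by
  obtain ⟨y, rfl⟩ := ZMod.natCast_zmod_surjective x
  rw [map_natCast, ZMod.natCast_eq_zero_iff, ← Nat.cast_pow, ← Nat.cast_mul,
    ZMod.natCast_eq_zero_iff]
  rcases le_total s μ with h | h
  · obtain ⟨d, rfl⟩ := Nat.exists_eq_add_of_le h
    rw [Nat.add_sub_cancel_left, pow_add]
    exact Nat.mul_dvd_mul_iff_left (pow_pos (NeZero.pos p) s)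
  · rw [Nat.sub_eq_zero_of_le h, pow_zero]
    exact iff_of_true (Dvd.dvd.mul_right (pow_dvd_pow p h) y) (one_dvd _)

theorem isLocalHom_castHom_prime_pow (hμ : μ ≠ 0) :
    IsLocalHom (ZMod.castHom (dvd_pow_self p hμ) (ZMod p)) where
  map_nonunit x hx := by
    obtain ⟨y, rfl⟩ := ZMod.natCast_zmod_surjective x
    rw [map_natCast, ZMod.isUnit_iff_coprime] at hx
    exact (ZMod.isUnit_iff_coprime _ _).2 (hx.pow_right μ)

theorem expect_prime_pow_mul_det_ne_zero (s n : ℕ) :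
    𝔼 Y : symMatrix (Fin n) (ZMod (p ^ μ)),
      (if (p : ZMod (p ^ μ)) ^ s * Y.1.det ≠ 0 then 1 else 0 : ℝ) = Psym n (p ^ (μ - s)) := by
  rw [Psym_eq_expect, ← expect_comp_addMonoidHom _ (symMatrix.map_surjective
    (ZMod.castHom_surjective (pow_dvd_pow p (Nat.sub_le μ s))))]
  refine expect_congr rfl fun Y _ => ?_
  simp only [ne_eq, symMatrix.det_map, prime_pow_mul_eq_zero_iff]

/- When `corank A ≥ μ`, the truncated exponent is `0`, and the summand `Psym _ 1 = 0` is right,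
since then `p ^ corank A = 0`. -/
theorem Psym_prime_pow (n : ℕ) (hμ : μ ≠ 0) : Psym n (p ^ μ) =
    𝔼 A : symMatrix (Fin n) (ZMod p), Psym (corank A.1) (p ^ (μ - corank A.1)) := by
  have := isLocalHom_castHom_prime_pow (p := p) hμ
  rw [Psym_eq_expect, expect_det_eq_expect_expect (ϖ := (p : ZMod (p ^ μ)))
    (ZMod.castHom_surjective (dvd_pow_self p hμ))
    (natCast_dvd_of_castHom_eq_zero _) (by simp) (F := fun x => if x ≠ 0 then 1 else 0) ?_]
  · simp only [expect_prime_pow_mul_det_ne_zero]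
  · intro u x hu
    simp only [ne_eq, hu.mul_right_eq_zero]

end PrimePower

section BorderedMatrix

variable {n K : Type*} [Fintype n] [Field K]

theorem corank_reindex {m : Type*} [Fintype m] (e : m ≃ n) (A : Matrix m m K) :
    corank (A.reindex e e) = corank A := by
  have h := rank_add_corank (A.reindex e e)
  rw [rank_reindex, ← Fintype.card_congr e, ← rank_add_corank A] at h
  exact Nat.add_left_cancel h

/-- The matrix obtained from `A` by adding a last row and a last column with entries `c`, which
meet in the entry `d`. -/
def border {R : Type*} (A : Matrix n n R) (c : n → R) (d : R) : Matrix (n ⊕ Unit) (n ⊕ Unit) R :=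
  fromBlocks A (replicateCol Unit c) (replicateRow Unit c) (of fun _ _ => d)

theorem border_mulVec_eq_zero_iff {A : Matrix n n K} {c : n → K} {d : K} {x : n → K} {y : K} :
    border A c d *ᵥ Sum.elim x (fun _ => y) = 0 ↔ A *ᵥ x + y • c = 0 ∧ c ⬝ᵥ x + d * y = 0 := by
  simp [border, fromBlocks_mulVec, funext_iff, mulVec, dotProduct, mul_comm]

theorem corank_eq_finrank_add_finrank {B : Matrix (n ⊕ Unit) (n ⊕ Unit) K} (v : n → K)
    {P : Submodule K (n → K)} {Q : Submodule K K}
    (h : ∀ x y, B *ᵥ Sum.elim (x - y • v) (fun _ => y) = 0 ↔ x ∈ P ∧ y ∈ Q) :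
    corank B = Module.finrank K P + Module.finrank K Q := by
  let f : P × Q →ₗ[K] (n ⊕ Unit → K) :=
    { toFun z := Sum.elim (z.1.1 - z.2.1 • v) (fun _ => z.2.1)
      map_add' z w := by ext (_ | _) <;> simp [add_mul, add_sub_add_comm]
      map_smul' a z := by ext (_ | _) <;> simp [mul_sub, mul_assoc] }
  have hf : Function.Injective f := by
    rintro ⟨⟨x, hx⟩, y, hy⟩ ⟨⟨x', hx'⟩, y', hy'⟩ heq
    obtain ⟨h₁, h₂⟩ := Sum.elim_eq_iff.1 heq
    obtain rfl : y = y' := congrFun h₂ ()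
    obtain rfl : x = x' := sub_left_injective h₁
    rfl
  have hrange : LinearMap.range f = LinearMap.ker B.mulVecLin := by
    ext z
    rw [LinearMap.mem_ker, mulVecLin_apply]
    constructor
    · rintro ⟨w, rfl⟩
      exact (h _ _).2 ⟨w.1.2, w.2.2⟩
    · intro hz
      have hz' : Sum.elim (z ∘ Sum.inl + z (.inr ()) • v - z (.inr ()) • v)
          (fun _ => z (.inr ())) = z := by
        ext (i | i) <;> simp
      rw [← hz', h] at hz
      exact ⟨⟨⟨_, hz.1⟩, ⟨_, hz.2⟩⟩, hz'⟩
  rw [corank, ← hrange, LinearMap.finrank_range_of_inj hf, Module.finrank_prod]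

theorem corank_border_mulVec [DecidableEq K] {A : Matrix n n K} (hA : A.IsSymm) (v : n → K)
    (d : K) :
    corank (border A (A *ᵥ v) d) = corank A + if d = (A *ᵥ v) ⬝ᵥ v then 1 else 0 := by
  have key (x : n → K) (y : K) :
      border A (A *ᵥ v) d *ᵥ Sum.elim (x - y • v) (fun _ => y) = 0 ↔
        A *ᵥ x = 0 ∧ (d - (A *ᵥ v) ⬝ᵥ v) * y = 0 := by
    rw [border_mulVec_eq_zero_iff, mulVec_sub, mulVec_smul, sub_add_cancel]
    refine and_congr_right fun hx => ?_
    have : (A *ᵥ v) ⬝ᵥ x = 0 := by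
      rw [dotProduct_comm, dotProduct_mulVec, ← mulVec_transpose, hA.eq, hx, zero_dotProduct]
    rw [dotProduct_sub, this, dotProduct_smul, smul_eq_mul]
    ring_nf
  split_ifs with hd
  · rw [corank_eq_finrank_add_finrank (P := LinearMap.ker A.mulVecLin) (Q := ⊤) v, corank,
      finrank_top, Module.finrank_self]
    intro x y
    rw [key, sub_eq_zero.2 hd]
    simp
  · rw [corank_eq_finrank_add_finrank (P := LinearMap.ker A.mulVecLin) (Q := ⊥) v, corank,
      finrank_bot]
    intro x y
    simp [key, sub_ne_zero.2 hd]

theorem exists_mulVec_eq_zero_and_dotProduct_ne_zero {A : Matrix n n K} (hA : A.IsSymm)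
    {c : n → K} (hc : c ∉ LinearMap.range A.mulVecLin) :
    ∃ x, A *ᵥ x = 0 ∧ c ⬝ᵥ x ≠ 0 := by
  classical
  obtain ⟨f, hfc, hf⟩ := Submodule.exists_le_ker_of_notMem hc
  obtain ⟨x, rfl⟩ := (dotProductEquiv K n).surjective f
  refine ⟨x, dotProduct_eq_zero _ fun w => ?_, by rwa [dotProduct_comm]⟩
  have : x ⬝ᵥ (A *ᵥ w) = 0 := hf ⟨w, rfl⟩
  rwa [dotProduct_mulVec, ← mulVec_transpose, hA.eq] at this

theorem corank_border_add_one {A : Matrix n n K} (hA : A.IsSymm) {c : n → K}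
    (hc : c ∉ LinearMap.range A.mulVecLin) (d : K) : corank (border A c d) + 1 = corank A := by
  classical
  let f : Module.Dual K (LinearMap.ker A.mulVecLin) :=
    (dotProductEquiv K n c).domRestrict _
  have hf : f ≠ 0 := by
    obtain ⟨x, hx, hcx⟩ := exists_mulVec_eq_zero_and_dotProduct_ne_zero hA hc
    exact fun h => hcx (LinearMap.congr_fun h ⟨x, hx⟩)
  rw [corank_eq_finrank_add_finrank (P := (LinearMap.ker f).map (Submodule.subtype _)) (Q := ⊥) 0,
    finrank_bot, add_zero, Submodule.finrank_map_subtype_eq,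
    Module.Dual.finrank_ker_add_one_of_ne_zero hf, corank]
  intro x y
  rw [smul_zero, sub_zero, border_mulVec_eq_zero_iff, LinearMap.ker_domRestrict,
    Submodule.map_comap_subtype]
  constructor
  · rintro ⟨h₁, h₂⟩
    have hy : y = 0 := by
      by_contra hy
      refine hc ⟨-(y⁻¹ • x), ?_⟩
      rw [mulVecLin_apply, mulVec_neg, mulVec_smul, eq_neg_of_add_eq_zero_left h₁, smul_neg,
        neg_neg, inv_smul_smul₀ hy]
    rw [hy, zero_smul, add_zero] at h₁
    rw [hy, mul_zero, add_zero] at h₂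
    exact ⟨⟨h₁, h₂⟩, hy⟩
  · rintro ⟨⟨h₁, h₂⟩, hy⟩
    obtain rfl : y = 0 := hy
    rw [zero_smul, mul_zero, add_zero, add_zero]
    exact ⟨h₁, h₂⟩

variable [Fintype K]

/-- A symmetric matrix with one more index is a bordered symmetric matrix. -/
def borderEquiv (n R : Type*) [CommRing R] :
    symMatrix n R × (n → R) × R ≃ symMatrix (n ⊕ Unit) R where
  toFun z := ⟨border z.1.1 z.2.1 z.2.2, z.1.2.fromBlocks rfl rfl⟩
  invFun B := (⟨B.1.toBlocks₁₁, congrArg toBlocks₁₁ B.2⟩, fun i => B.1 (.inl i) (.inr ()),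
    B.1 (.inr ()) (.inr ()))
  left_inv z := rfl
  right_inv B := by
    ext (i | i) (j | j)
    · rfl
    · rfl
    · exact B.2.apply _ _
    · rfl

theorem expect_symMatrix_sum_unit [DecidableEq n] (f : Matrix (n ⊕ Unit) (n ⊕ Unit) K → ℝ) :
    𝔼 B : symMatrix (n ⊕ Unit) K, f B.1 =
      𝔼 A : symMatrix n K, 𝔼 c, 𝔼 d, f (border A.1 c d) := by
  rw [← Fintype.expect_equiv (borderEquiv n K) (fun z => f (border z.1.1 z.2.1 z.2.2)) _
    fun _ => rfl, ← univ_product_univ, expect_product]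
  refine expect_congr rfl fun A _ => ?_
  rw [← univ_product_univ, expect_product]

theorem card_range_mulVecLin_div (A : Matrix n n K) [Fintype (LinearMap.range A.mulVecLin)]
    [DecidableEq n] :
    (Fintype.card (LinearMap.range A.mulVecLin) / Fintype.card (n → K) : ℝ) =
      (1 / Fintype.card K) ^ corank A := by
  have hK : (Fintype.card K : ℝ) ≠ 0 := Nat.cast_ne_zero.2 Fintype.card_ne_zero
  rw [Module.card_eq_pow_finrank (K := K), Fintype.card_fun, ← rank_add_corank A]
  push_cast
  rw [pow_add, ← Matrix.rank, one_div, inv_pow, mul_comm,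
    div_mul_cancel_right₀ (pow_ne_zero _ hK)]

theorem expect_corank_border {A : Matrix n n K} (hA : A.IsSymm) (F : ℕ → ℝ) [DecidableEq n]
    {q : ℝ} (hq : q = 1 / Fintype.card K) :
    𝔼 c, 𝔼 d, F (corank (border A c d)) =
      q ^ corank A * (q * F (corank A + 1) + (1 - q) * F (corank A)) +
        (1 - q ^ corank A) * F (corank A - 1) := by
  classical
  have hc (c : n → K) : 𝔼 d, F (corank (border A c d)) =
      if c ∈ LinearMap.range A.mulVecLin then q * F (corank A + 1) + (1 - q) * F (corank A)
      else F (corank A - 1) := by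
    split_ifs with h
    · obtain ⟨v, rfl⟩ := h
      have hd (d : K) : F (corank (border A (A *ᵥ v) d)) =
          if d = (A *ᵥ v) ⬝ᵥ v then F (corank A + 1) else F (corank A) := by
        rw [corank_border_mulVec hA]
        split_ifs <;> rfl
      simp only [mulVecLin_apply, hd]
      rw [expect_ite_const, Fintype.card_subtype_eq, Nat.cast_one, ← hq]
    · have hd (d : K) : corank (border A c d) = corank A - 1 :=
        Nat.eq_sub_of_add_eq (corank_border_add_one hA h d)
      simp only [hd, Fintype.expect_const]
  simp only [hc]
  rw [expect_ite_const, card_range_mulVecLin_div, ← hq]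

theorem expect_corank_succ (n : ℕ) (F : ℕ → ℝ) {q : ℝ} (hq : q = 1 / Fintype.card K) :
    𝔼 B : symMatrix (Fin (n + 1)) K, F (corank B.1) = 𝔼 A : symMatrix (Fin n) K,
      (q ^ corank A.1 * (q * F (corank A.1 + 1) + (1 - q) * F (corank A.1)) +
        (1 - q ^ corank A.1) * F (corank A.1 - 1)) := by
  let e : Fin n ⊕ Unit ≃ Fin (n + 1) :=
    (Equiv.optionEquivSumPUnit _).symm.trans finSuccEquivLast.symm
  rw [← Fintype.expect_equiv (symMatrix.reindex e) (fun A => F (corank A.1)) _ fun A => by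
    rw [symMatrix.coe_reindex, corank_reindex], expect_symMatrix_sum_unit fun B => F (corank B)]
  exact expect_congr rfl fun A _ => expect_corank_border A.2 F hq

end BorderedMatrix

section QIdentities

variable {R : Type*} [CommRing R]

theorem one_sub_pow_mul_sum_antidiagonal_succ (q : R) (n : ℕ) (b : ℕ → ℕ → R) :
    (1 - q ^ (n + 1)) * ∑ x ∈ antidiagonal (n + 1), b x.1 x.2 =
      ∑ x ∈ antidiagonal n, ((1 - q ^ (x.1 + 1)) * b (x.1 + 1) x.2 +
        q ^ x.1 * (1 - q ^ (x.2 + 1)) * b x.1 (x.2 + 1)) := by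
  have h₁ := Nat.sum_antidiagonal_succ (n := n) (f := fun x => (1 - q ^ x.1) * b x.1 x.2)
  have h₂ := Nat.sum_antidiagonal_succ' (n := n)
    (f := fun x => q ^ x.1 * (1 - q ^ x.2) * b x.1 x.2)
  simp only [pow_zero, sub_self, mul_zero, zero_mul, zero_add] at h₁ h₂
  rw [sum_add_distrib, ← h₁, ← h₂, ← sum_add_distrib, mul_sum]
  refine sum_congr rfl fun x hx => ?_
  rw [← mem_antidiagonal.1 hx, pow_add]
  ring

/- With `g k = (∏ j < k, (1 - z * t ^ j))⁻¹` this is the finite form of Cauchy's identity, which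
sorts partitions by the size of their Durfee square. -/
theorem sum_antidiagonal_durfee [IsDomain R] {t : R} (ht : ∀ n ≠ 0, t ^ n ≠ 1) {E : ℕ → R}
    (hE₀ : E 0 = 1) (hE : ∀ k, (1 - t ^ (k + 1)) * E (k + 1) = E k) (m : ℕ) {z : R} {g : ℕ → R}
    (hg : ∀ k, g k = (1 - z * t ^ k) * g (k + 1)) :
    ∑ x ∈ antidiagonal m, E x.1 * E x.2 * (t ^ (x.1 * (x.1 - 1)) * z ^ x.1 * g x.1) =
      E m * g m := by
  induction m generalizing z g with
  | zero => simp [hE₀]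
  | succ m ih =>
    apply mul_left_cancel₀ (sub_ne_zero.2 (ht _ m.succ_ne_zero).symm)
    rw [one_sub_pow_mul_sum_antidiagonal_succ t m fun k l =>
        E k * E l * (t ^ (k * (k - 1)) * z ^ k * g k), ← mul_assoc, hE,
      ← ih (z := t * z) (g := fun k => g (k + 1)) fun k => by
        rw [hg (k + 1), pow_succ]
        ring]
    refine sum_congr rfl fun ⟨k, l⟩ _ => ?_
    have hexp : t ^ k * t ^ (k * (k - 1)) = t ^ (k * k) := by
      rw [← pow_add]
      cases k with
      | zero => rfl
      | succ k =>
        rw [Nat.add_sub_cancel]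
        ring
    simp only [Nat.add_sub_cancel]
    linear_combination (E l * (t ^ ((k + 1) * k) * z ^ (k + 1) * g (k + 1))) * hE k +
      (t ^ k * E k * (t ^ (k * (k - 1)) * z ^ k * g k)) * hE l +
      E k * E l * (t ^ k * t ^ (k * (k - 1)) * z ^ k) * hg k -
      E k * E l * (t ^ k * z ^ (k + 1) * g (k + 1)) * hexp

theorem sum_antidiagonal_two_mul_add_one (c E : ℕ → R) (m : ℕ) :
    ∑ x ∈ antidiagonal (2 * m + 1), c x.1 * E (x.2 / 2) =
      ∑ x ∈ antidiagonal m, (c (2 * x.1) + c (2 * x.1 + 1)) * E x.2 := by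
  induction m generalizing c with
  | zero => simp [Nat.sum_antidiagonal_succ, add_mul]
  | succ m ih =>
    have h : ∑ x ∈ antidiagonal (2 * m + 1), c (x.1 + 1 + 1) * E (x.2 / 2) =
        ∑ x ∈ antidiagonal m, (c (2 * (x.1 + 1)) + c (2 * (x.1 + 1) + 1)) * E x.2 :=
      ih fun r => c (r + 1 + 1)
    simp only [Nat.sum_antidiagonal_succ (n := m), show 2 * (m + 1) + 1 = 2 * m + 1 + 1 + 1 by ring,
      Nat.sum_antidiagonal_succ, h, show (2 * m + 1 + 1 + 1) / 2 = m + 1 by omega,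
      show (2 * m + 1 + 1) / 2 = m + 1 by omega]
    ring

theorem sum_antidiagonal_two_mul {t : R} {E : ℕ → R}
    (hE : ∀ k, (1 - t ^ (k + 1)) * E (k + 1) = E k) (c : ℕ → R) (m : ℕ) :
    ∑ x ∈ antidiagonal (2 * m), c x.1 * E (x.2 / 2) =
      ∑ x ∈ antidiagonal m, (c (2 * x.1) + c (2 * x.1 + 1) * (1 - t ^ x.2)) * E x.2 := by
  induction m generalizing c with
  | zero => simp
  | succ m ih =>
    have h : ∑ x ∈ antidiagonal (2 * m), c (x.1 + 1 + 1) * E (x.2 / 2) =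
        ∑ x ∈ antidiagonal m,
          (c (2 * (x.1 + 1)) + c (2 * (x.1 + 1) + 1) * (1 - t ^ x.2)) * E x.2 :=
      ih fun r => c (r + 1 + 1)
    simp only [Nat.sum_antidiagonal_succ (n := m), show 2 * (m + 1) = 2 * m + 1 + 1 by ring,
      Nat.sum_antidiagonal_succ, h, show (2 * m + 1 + 1) / 2 = m + 1 by omega,
      show (2 * m + 1) / 2 = m by omega]
    linear_combination -c 1 * hE m
end QIdentities

section CorankDistribution

variable {q : ℝ}

theorem PiProd_zero (t : ℝ) : PiProd 0 t = 1 := prod_range_zero _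

theorem PiProd_succ (n : ℕ) (t : ℝ) : PiProd (n + 1) t = PiProd n t * (1 - t ^ (n + 1)) :=
  prod_range_succ _ _

theorem PiProd_ne_zero {t : ℝ} (ht : ∀ n ≠ 0, t ^ n ≠ 1) (n : ℕ) : PiProd n t ≠ 0 :=
  prod_ne_zero_iff.2 fun j _ => sub_ne_zero.2 (ht _ j.succ_ne_zero).symm

theorem one_sub_pow_mul_inv_PiProd_succ {t : ℝ} (ht : ∀ n ≠ 0, t ^ n ≠ 1) (n : ℕ) :
    (1 - t ^ (n + 1)) * (PiProd (n + 1) t)⁻¹ = (PiProd n t)⁻¹ := by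
  rw [PiProd_succ, mul_comm (PiProd n t), mul_inv,
    mul_inv_cancel_left₀ (sub_ne_zero.2 (ht _ n.succ_ne_zero).symm)]

theorem pow_sq_ne_one (hq : ∀ n ≠ 0, q ^ n ≠ 1) : ∀ n ≠ 0, (q ^ 2) ^ n ≠ 1 := fun n hn => by
  rw [← pow_mul]
  exact hq _ (by omega)

theorem one_sub_pow_mul_inv_PiProd_half (hq : ∀ n ≠ 0, q ^ n ≠ 1) (m : ℕ) :
    (1 - q ^ (m + 2)) * (PiProd ((m + 2) / 2) (q ^ 2))⁻¹ =
      (1 - q) * (PiProd ((m + 1) / 2) (q ^ 2))⁻¹ + q * (PiProd (m / 2) (q ^ 2))⁻¹ := by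
  rcases Nat.even_or_odd' m with ⟨k, rfl | rfl⟩
  · rw [show 2 * k / 2 = k by omega, show (2 * k + 1) / 2 = k by omega,
      show (2 * k + 2) / 2 = k + 1 by omega]
    linear_combination one_sub_pow_mul_inv_PiProd_succ (pow_sq_ne_one hq) k
  · rw [show (2 * k + 1) / 2 = k by omega, show (2 * k + 1 + 1) / 2 = k + 1 by omega,
      show (2 * k + 1 + 2) / 2 = k + 1 by omega]
    linear_combination q * one_sub_pow_mul_inv_PiProd_succ (pow_sq_ne_one hq) k

/-- Up to the factor `PiProd (r + m) q`, the proportion of the matrices of corank `r` among the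
symmetric matrices of size `r + m` over a field with `1 / q` elements. -/
noncomputable def corankWeight (q : ℝ) (r m : ℕ) : ℝ :=
  q ^ (r + 1).choose 2 / PiProd r q * (PiProd (m / 2) (q ^ 2))⁻¹

theorem corankWeight_succ_left (hq : ∀ n ≠ 0, q ^ n ≠ 1) (r m : ℕ) :
    (1 - q ^ (r + 1)) * corankWeight q (r + 1) m = q ^ (r + 1) * corankWeight q r m := by
  have h := one_sub_pow_mul_inv_PiProd_succ hq r
  rw [corankWeight, corankWeight, Nat.choose_succ_succ', Nat.choose_one_right, pow_add,
    div_eq_mul_inv, div_eq_mul_inv, ← h]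
  ring

theorem corankWeight_succ_succ_right (hq : ∀ n ≠ 0, q ^ n ≠ 1) (r m : ℕ) :
    (1 - q ^ (m + 2)) * corankWeight q r (m + 2) =
      (1 - q) * corankWeight q r (m + 1) + q * corankWeight q r m := by
  simp only [corankWeight]
  linear_combination q ^ (r + 1).choose 2 / PiProd r q * one_sub_pow_mul_inv_PiProd_half hq m

theorem corankWeight_one_right (r : ℕ) : corankWeight q r 1 = corankWeight q r 0 := rfl

theorem one_sub_pow_mul_sum_corankWeight (hq : ∀ n ≠ 0, q ^ n ≠ 1) (n : ℕ) (F : ℕ → ℝ) :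
    (1 - q ^ (n + 1)) * ∑ x ∈ antidiagonal (n + 1), corankWeight q x.1 x.2 * F x.1 =
      ∑ x ∈ antidiagonal n, corankWeight q x.1 x.2 *
        (q ^ x.1 * (q * F (x.1 + 1) + (1 - q) * F x.1) + (1 - q ^ x.1) * F (x.1 - 1)) := by
  rw [one_sub_pow_mul_sum_antidiagonal_succ q n fun r m => corankWeight q r m * F r]
  have h : ∑ x ∈ antidiagonal n, q ^ x.1 *
        ((1 - q ^ (x.2 + 1)) * corankWeight q x.1 (x.2 + 1) - (1 - q) * corankWeight q x.1 x.2) *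
          F x.1 =
      ∑ x ∈ antidiagonal n, (1 - q ^ x.1) * corankWeight q x.1 x.2 * F (x.1 - 1) := by
    cases n with
    | zero => simp [corankWeight_one_right]
    | succ n =>
      rw [Nat.sum_antidiagonal_succ', Nat.sum_antidiagonal_succ]
      simp only [pow_zero, sub_self, zero_mul, zero_add, corankWeight_one_right, pow_one, mul_zero,
        Nat.add_sub_cancel, corankWeight_succ_left hq]
      refine sum_congr rfl fun x _ => ?_
      linear_combination q ^ x.1 * F x.1 * corankWeight_succ_succ_right hq x.1 x.2
  rw [← sub_eq_zero, ← sum_sub_distrib] at h ⊢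
  rw [← h]
  refine sum_congr rfl fun x _ => ?_
  linear_combination F (x.1 + 1) * corankWeight_succ_left hq x.1 x.2

theorem one_div_pow_ne_one {m : ℕ} (hm : 1 < m) (hq : q = 1 / m) : ∀ n ≠ 0, q ^ n ≠ 1 :=
  fun _ hn => by
    have hm' : (1 : ℝ) < m := Nat.one_lt_cast.2 hm
    rw [hq]
    exact (pow_lt_one₀ (by positivity) ((div_lt_one (by positivity)).2 hm') hn).ne

theorem expect_corank {K : Type*} [Field K] [Fintype K] (hq : q = 1 / Fintype.card K)
    (n : ℕ) (F : ℕ → ℝ) :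
    𝔼 A : symMatrix (Fin n) K, F (corank A.1) =
      PiProd n q * ∑ x ∈ antidiagonal n, corankWeight q x.1 x.2 * F x.1 := by
  induction n generalizing F with
  | zero =>
    have h (A : Matrix (Fin 0) (Fin 0) K) : corank A = 0 :=
      (Nat.add_eq_zero_iff.1 (rank_add_corank A)).2
    simp [h, corankWeight, PiProd_zero]
  | succ n ih =>
    rw [expect_corank_succ n F hq, ih fun r =>
      q ^ r * (q * F (r + 1) + (1 - q) * F r) + (1 - q ^ r) * F (r - 1),
      ← one_sub_pow_mul_sum_corankWeight (one_div_pow_ne_one Fintype.one_lt_card hq),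
      PiProd_succ, mul_assoc]

end CorankDistribution

section GeneratingSeries

variable {q : ℝ}

theorem PiProd_add_div_succ_succ {t : ℝ} (ht : ∀ n ≠ 0, t ^ n ≠ 1) (k j : ℕ) :
    PiProd (k + 1 + (j + 1)) t / (PiProd (j + 1) t * PiProd (k + 1) t) =
      PiProd (k + (j + 1)) t / (PiProd (j + 1) t * PiProd k t) +
        t ^ (k + 1) * (PiProd (k + 1 + j) t / (PiProd j t * PiProd (k + 1) t)) := by
  have hk := sub_ne_zero.2 (ht _ k.succ_ne_zero).symm
  have hj := sub_ne_zero.2 (ht _ j.succ_ne_zero).symm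
  have hPk := PiProd_ne_zero ht k
  have hPj := PiProd_ne_zero ht j
  rw [show k + 1 + (j + 1) = k + j + 1 + 1 by ring, ← add_assoc k j, add_right_comm k 1 j,
    PiProd_succ (k + j + 1), PiProd_succ j, PiProd_succ k]
  field_simp
  ring

theorem T_one_succ (q : ℝ) (k s : ℕ) : T q 1 (k + 1) s = ∑ j ∈ range (s + 1),
    q ^ j * (PiProd (k + j) (q ^ 2) / (PiProd j (q ^ 2) * PiProd k (q ^ 2))) := by
  rw [T, if_neg k.succ_ne_zero]
  refine sum_congr rfl fun j _ => ?_
  rw [show k + 1 + j - 1 = k + j by omega, Nat.add_sub_cancel, one_mul, mul_div_assoc]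

theorem T_one_zero_right (hq : ∀ n ≠ 0, q ^ n ≠ 1) (k : ℕ) : T q 1 k 0 = 1 := by
  cases k with
  | zero => exact if_pos rfl
  | succ k => simp [T_one_succ, PiProd_zero, PiProd_ne_zero (pow_sq_ne_one hq) k]

theorem T_one_succ_succ (hq : ∀ n ≠ 0, q ^ n ≠ 1) (k s : ℕ) :
    T q 1 (k + 1) (s + 1) = T q 1 k (s + 1) + q ^ (2 * k + 1) * T q 1 (k + 1) s := by
  have hP := PiProd_ne_zero (pow_sq_ne_one hq)
  cases k with
  | zero =>
    simp only [T_one_succ, zero_add, PiProd_zero, mul_one, div_self (hP _), mul_zero, pow_one]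
    rw [T, if_pos rfl, sum_range_succ', mul_sum, pow_zero, add_comm]
    simp only [pow_succ']
  | succ k =>
    simp only [T_one_succ]
    rw [sum_range_succ', sum_range_succ' _ (s + 1), mul_sum, add_right_comm (∑ _ ∈ _, _),
      ← sum_add_distrib]
    congr 1
    · refine sum_congr rfl fun j _ => ?_
      rw [PiProd_add_div_succ_succ (pow_sq_ne_one hq)]
      ring
    · simp [PiProd_zero, hP]

/-- The generating series of `q ^ ν * T q 1 k (ν / 2)`, where `ν = μ - 1` for the modulus `p ^ μ`: a
common factor of the closed forms for the sizes `2 * k` and `2 * k + 1`. -/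
noncomputable def tSeries (q : ℝ) (k : ℕ) : ℝ⟦X⟧ :=
  PowerSeries.mk fun ν => q ^ ν * T q 1 k (ν / 2)

theorem one_sub_mul_tSeries_zero (q : ℝ) : (1 - C q * X) * tSeries q 0 = 1 := by
  ext ν
  rw [sub_mul, one_mul, mul_assoc, map_sub, coeff_C_mul]
  cases ν with
  | zero => simp [tSeries, T]
  | succ ν =>
    rw [coeff_succ_X_mul]
    simp [tSeries, T, coeff_one, pow_succ']

theorem one_sub_mul_tSeries_succ (hq : ∀ n ≠ 0, q ^ n ≠ 1) (k : ℕ) :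
    (1 - C (q ^ (2 * k + 3)) * X ^ 2) * tSeries q (k + 1) = tSeries q k := by
  ext ν
  rw [sub_mul, one_mul, mul_assoc, map_sub, coeff_C_mul, coeff_X_pow_mul']
  simp only [tSeries, coeff_mk]
  split_ifs with h
  · obtain ⟨ν, rfl⟩ := Nat.exists_eq_add_of_le' h
    rw [Nat.add_sub_cancel, Nat.add_div_right _ (by norm_num), T_one_succ_succ hq]
    ring
  · rw [Nat.div_eq_of_lt (by omega), T_one_zero_right hq, T_one_zero_right hq]
    ring

end GeneratingSeries

section NondegeneracySeries

variable {q : ℝ}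

theorem eq_zero_of_eq_sum_antidiagonal {K : Type*} [Field K] {c : ℕ → ℕ × ℕ → K} {D : ℕ → K⟦X⟧}
    (h₀ : D 0 = 0) (hD : ∀ n, D n = ∑ x ∈ antidiagonal n, C (c n x) * X ^ x.1 * D x.1) (n : ℕ) :
    D n = 0 := by
  induction n using Nat.strong_induction_on with
  | _ n ih =>
    rcases eq_or_ne n 0 with rfl | hn
    · exact h₀
    have hsum : D n = C (c n (n, 0)) * X ^ n * D n := by
      conv_lhs => rw [hD n]
      refine sum_eq_single (n, 0) (fun x hx hne => ?_) (by simp)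
      have hlt : x.1 < n := by
        have hx := mem_antidiagonal.1 hx
        have : x.1 ≠ n := fun h => hne (Prod.ext h (by omega))
        omega
      rw [ih _ hlt, mul_zero]
    have hmul : (1 - C (c n (n, 0)) * X ^ n) * D n = 0 := by linear_combination hsum
    refine (mul_eq_zero.1 hmul).resolve_left fun h => ?_
    simpa [hn] using congrArg constantCoeff h

/-- The closed form of `(1 - X) * psymSeries p n` for `q = 1 / p`, up to the factor `PiProd n q`. -/
noncomputable def reducedSeries (q : ℝ) (n : ℕ) : ℝ⟦X⟧ :=
  C (PiProd (n / 2) (q ^ 2))⁻¹ * (if Even n then 1 - C (q ^ (n + 1)) * X else 1) * tSeries q (n / 2)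

theorem reducedSeries_two_mul (q : ℝ) (k : ℕ) : reducedSeries q (2 * k) =
    C (PiProd k (q ^ 2))⁻¹ * (1 - C (q ^ (2 * k + 1)) * X) * tSeries q k := by
  rw [reducedSeries, if_pos (even_two_mul k), Nat.mul_div_cancel_left k two_pos]

theorem reducedSeries_two_mul_add_one (q : ℝ) (k : ℕ) : reducedSeries q (2 * k + 1) =
    C (PiProd k (q ^ 2))⁻¹ * tSeries q k := by
  rw [reducedSeries, if_neg (Nat.not_even_two_mul_add_one k), mul_one,
    show (2 * k + 1) / 2 = k by omega]

theorem pow_choose_mul_X_pow_two_mul (q : ℝ) (k : ℕ) :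
    C (q ^ (2 * k + 1).choose 2) * (X : ℝ⟦X⟧) ^ (2 * k) =
      C (q ^ 2) ^ (k * (k - 1)) * (C (q ^ 3) * X ^ 2) ^ k := by
  have hexp : (2 * k + 1).choose 2 = 2 * (k * (k - 1)) + 3 * k := by
    rw [Nat.choose_two_right, Nat.add_sub_cancel, mul_left_comm, Nat.mul_div_cancel_left _ two_pos]
    cases k with
    | zero => rfl
    | succ k =>
      rw [Nat.add_sub_cancel]
      ring
  simp only [hexp, map_pow]
  ring

theorem one_sub_pow_mul_C_inv_PiProd_succ {t : ℝ} (ht : ∀ n ≠ 0, t ^ n ≠ 1) (k : ℕ) :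
    (1 - C t ^ (k + 1)) * C (PiProd (k + 1) t)⁻¹ = C (R := ℝ) (PiProd k t)⁻¹ := by
  rw [← one_sub_pow_mul_inv_PiProd_succ ht k, map_mul, map_sub, map_one, map_pow]

theorem sum_antidiagonal_durfee_tSeries (hq : ∀ n ≠ 0, q ^ n ≠ 1) (m : ℕ) :
    ∑ x ∈ antidiagonal m, C (PiProd x.1 (q ^ 2))⁻¹ * C (PiProd x.2 (q ^ 2))⁻¹ *
      (C (q ^ (2 * x.1 + 1).choose 2) * X ^ (2 * x.1) * tSeries q x.1) =
    C (PiProd m (q ^ 2))⁻¹ * tSeries q m := by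
  have ht : ∀ n ≠ 0, (C (q ^ 2) : ℝ⟦X⟧) ^ n ≠ 1 := fun n hn h =>
    pow_sq_ne_one hq n hn (C_injective (by rw [map_pow, h, map_one]))
  simp only [pow_choose_mul_X_pow_two_mul]
  refine sum_antidiagonal_durfee (E := fun k => C (PiProd k (q ^ 2))⁻¹) ht (by simp [PiProd_zero])
    (one_sub_pow_mul_C_inv_PiProd_succ (pow_sq_ne_one hq)) m fun k => ?_
  rw [← one_sub_mul_tSeries_succ hq]
  simp only [map_pow]
  ring

theorem reducedSeries_eq_sum (hq : ∀ n ≠ 0, q ^ n ≠ 1) (n : ℕ) :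
    reducedSeries q n = ∑ x ∈ antidiagonal n,
      C (q ^ (x.1 + 1).choose 2) * X ^ x.1 * reducedSeries q x.1 *
        C (PiProd (x.2 / 2) (q ^ 2))⁻¹ := by
  let c (r : ℕ) : ℝ⟦X⟧ := C (q ^ (r + 1).choose 2) * X ^ r * reducedSeries q r
  let E (k : ℕ) : ℝ⟦X⟧ := C (PiProd k (q ^ 2))⁻¹
  let d (k : ℕ) : ℝ⟦X⟧ := C (q ^ (2 * k + 1).choose 2) * X ^ (2 * k) * tSeries q k
  have hc₀ (k : ℕ) : c (2 * k) = E k * d k * (1 - C (q ^ (2 * k + 1)) * X) := by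
    simp only [c, d, E, reducedSeries_two_mul]
    ring
  have hc₁ (k : ℕ) : c (2 * k + 1) = E k * d k * (C (q ^ (2 * k + 1)) * X) := by
    simp only [c, d, E, reducedSeries_two_mul_add_one, Nat.choose_succ_succ' (2 * k + 1) 1,
      Nat.choose_one_right, pow_add q (2 * k + 1), map_mul]
    ring
  rcases Nat.even_or_odd' n with ⟨m, rfl | rfl⟩
  · have hE := one_sub_pow_mul_C_inv_PiProd_succ (pow_sq_ne_one hq)
    rw [sum_antidiagonal_two_mul (E := E) hE c, reducedSeries_two_mul, mul_right_comm,
      ← sum_antidiagonal_durfee_tSeries hq, sum_mul]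
    refine sum_congr rfl fun ⟨k, l⟩ hx => ?_
    rw [hc₀, hc₁, ← mem_antidiagonal.1 hx, mul_add 2, add_right_comm, pow_add q]
    simp only [E, d, map_mul, map_pow]
    ring
  · rw [sum_antidiagonal_two_mul_add_one c E, reducedSeries_two_mul_add_one,
      ← sum_antidiagonal_durfee_tSeries hq]
    refine sum_congr rfl fun x _ => ?_
    rw [hc₀, hc₁]
    ring

/-- The generating series of the proportions `Psym n (p ^ (ν + 1))`, shifted by one because
`Psym n 1 = 0`. -/
noncomputable def psymSeries (p n : ℕ) : ℝ⟦X⟧ :=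
  PowerSeries.mk fun ν => Psym n (p ^ (ν + 1))

theorem psymSeries_eq_sum {p : ℕ} [Fact p.Prime] (hq : q = 1 / p) (n : ℕ) :
    psymSeries p n = ∑ x ∈ antidiagonal n,
      C (PiProd n q * corankWeight q x.1 x.2) * X ^ x.1 * psymSeries p x.1 := by
  have hshift (r ν : ℕ) : coeff ν (X ^ r * psymSeries p r) = Psym r (p ^ (ν + 1 - r)) := by
    rw [coeff_X_pow_mul']
    split_ifs with h
    · rw [psymSeries, coeff_mk, Nat.sub_add_comm h]
    · rw [Nat.sub_eq_zero_of_le (not_le.1 h), pow_zero, Psym_one]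
  ext ν
  simp only [map_sum, mul_assoc, coeff_C_mul, hshift, ← mul_sum]
  rw [psymSeries, coeff_mk, Psym_prime_pow n ν.succ_ne_zero,
    expect_corank (hq.trans (by rw [ZMod.card])) n fun r => Psym r (p ^ (ν + 1 - r))]

theorem one_sub_X_mul_psymSeries_zero {p : ℕ} (hp : 1 < p) : (1 - X) * psymSeries p 0 = 1 := by
  have h : psymSeries p 0 = PowerSeries.mk 1 :=
    congrArg PowerSeries.mk <| funext fun ν => Psym_zero_left (Nat.one_lt_pow ν.succ_ne_zero hp)
  rw [h, mul_comm, mk_one_mul_one_sub_eq_one]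

theorem one_sub_X_mul_psymSeries {p : ℕ} [hp : Fact p.Prime] (hq : q = 1 / p) (n : ℕ) :
    (1 - X) * psymSeries p n = C (PiProd n q) * reducedSeries q n := by
  have hq' := one_div_pow_ne_one hp.out.one_lt hq
  rw [← sub_eq_zero]
  refine eq_zero_of_eq_sum_antidiagonal
    (D := fun n => (1 - X) * psymSeries p n - C (PiProd n q) * reducedSeries q n)
    (c := fun n x => PiProd n q * corankWeight q x.1 x.2) ?_ (fun n => ?_) n
  · rw [one_sub_X_mul_psymSeries_zero hp.out.one_lt, ← mul_zero 2, reducedSeries_two_mul, mul_zero,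
      zero_add, pow_one, mul_assoc, one_sub_mul_tSeries_zero]
    simp [PiProd_zero]
  · simp only [mul_sub, sum_sub_distrib]
    congr 1
    · rw [psymSeries_eq_sum hq n, mul_sum]
      exact sum_congr rfl fun x _ => mul_left_comm _ _ _
    · rw [reducedSeries_eq_sum hq' n, mul_sum]
      refine sum_congr rfl fun x _ => ?_
      have hweight : corankWeight q x.1 x.2 * PiProd x.1 q =
          q ^ (x.1 + 1).choose 2 * (PiProd (x.2 / 2) (q ^ 2))⁻¹ := by
        rw [corankWeight, mul_right_comm, div_mul_cancel₀ _ (PiProd_ne_zero hq' _)]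
      calc _ = C (PiProd n q) * C (q ^ (x.1 + 1).choose 2 * (PiProd (x.2 / 2) (q ^ 2))⁻¹) *
            X ^ x.1 * reducedSeries q x.1 := by rw [map_mul]; ring
        _ = _ := by rw [← hweight]; simp only [map_mul]; ring

theorem psymSeries_two_mul {p : ℕ} [hp : Fact p.Prime] (hq : q = 1 / p) (k : ℕ) :
    psymSeries p (2 * k) = psymSeries p (2 * k + 1) +
      C (q ^ (2 * k + 1) * (PiProd (2 * k) q / PiProd k (q ^ 2))) * tSeries q k := by
  have hX : (1 - X : ℝ⟦X⟧) ≠ 0 := fun h => by simpa using congrArg constantCoeff h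
  apply mul_left_cancel₀ hX
  rw [mul_add, one_sub_X_mul_psymSeries hq, one_sub_X_mul_psymSeries hq, reducedSeries_two_mul,
    reducedSeries_two_mul_add_one, PiProd_succ, div_eq_mul_inv]
  simp only [map_mul, map_sub, map_one]
  ring

end NondegeneracySeries

theorem Psym_even_explicit (p : ℕ) (hp : p.Prime) (q : ℝ) (hq : q = 1 / p)
    (k μ : ℕ) (hμ : 1 ≤ μ) (s : ℕ) (hs : s = (μ - 1) / 2) :
    Psym (2 * k) (p ^ μ) =
      Psym (2 * k + 1) (p ^ μ) +
        q ^ (2 * k + μ) * (PiProd (2 * k) q / PiProd k (q ^ 2)) * T q 1 k s := by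
  have : Fact p.Prime := ⟨hp⟩
  obtain ⟨ν, rfl⟩ := Nat.exists_eq_add_of_le' hμ
  rw [Nat.add_sub_cancel] at hs
  subst hs
  have h := congrArg (coeff ν) (psymSeries_two_mul hq k)
  simp only [map_add, coeff_C_mul, psymSeries, tSeries, coeff_mk] at h
  rw [h]
  ring
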